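/- arXiv:2409.00322 — 6 statements merged into one kernel-verified Lean document; each statement's English description precedes it below -/
import Mathlib

section
/- For every ε > 0, for all neighboring datasets h and h̃, and for every r ∈ R, the exponential mechanism satisfies P_h(r) ≤ e^ε · P_{h̃}(r); consequently, for every subset S ⊆ R, P_h(S) ≤ e^ε · P_{h̃}(S) (i.e., the exponential mechanism is ε-differentially private). -/
/-- The exponential mechanism: on input dataset `h`, outputs `r` with probability
proportional to `exp (ε * u (h, r) / (2 * Δ))`. -/
noncomputable def expMech {X R : Type*} [Fintype R]
    (u : (X → ℕ) × R → ℝ) (Δ ε : ℝ) (h : X → ℕ) (r : R) : ℝ :=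
  Real.exp (ε * u (h, r) / (2 * Δ)) / ∑ r' : R, Real.exp (ε * u (h, r') / (2 * Δ))

/-- Privacy of the exponential mechanism: for neighboring datasets the output
probabilities (of single outcomes, and hence of any set of outcomes) differ by at
most a factor `e^ε`. -/
theorem expMech_privacy {X R : Type*} [Fintype X] [Nonempty X] [Fintype R] [Nonempty R]
    (u : (X → ℕ) × R → ℝ) (Δ : ℝ) (hΔ : 0 < Δ)
    (hsens : ∀ h h' : X → ℕ, (∑ x : X, |(h x : ℤ) - (h' x : ℤ)|) = 1 →
      ∀ r : R, |u (h, r) - u (h', r)| ≤ Δ)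
    (ε : ℝ) (hε : 0 < ε)
    (h h' : X → ℕ) (hneighbor : (∑ x : X, |(h x : ℤ) - (h' x : ℤ)|) = 1) :
    (∀ r : R, expMech u Δ ε h r ≤ Real.exp ε * expMech u Δ ε h' r) ∧
    (∀ S : Finset R, ∑ r ∈ S, expMech u Δ ε h r ≤ Real.exp ε * ∑ r ∈ S, expMech u Δ ε h' r) := by
  have key : ∀ x y : ℝ, |x - y| ≤ Δ →
      Real.exp (ε * x / (2 * Δ)) ≤ Real.exp (ε / 2) * Real.exp (ε * y / (2 * Δ)) := by
    intro x y hxy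
    rw [← Real.exp_add, Real.exp_le_exp]
    have h1 : x - y ≤ Δ := (abs_le.mp hxy).2
    have h2 : ε / 2 + ε * y / (2 * Δ) = (ε * (Δ + y)) / (2 * Δ) := by
      field_simp
    rw [h2]
    apply div_le_div_of_nonneg_right _ (by positivity)
    exact mul_le_mul_of_nonneg_left (by linarith) hε.le
  have main : ∀ r : R, expMech u Δ ε h r ≤ Real.exp ε * expMech u Δ ε h' r := by
    intro r
    have ha := key _ _ (hsens h h' hneighbor r)
    have hB : ∑ r' : R, Real.exp (ε * u (h', r') / (2 * Δ)) ≤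
        Real.exp (ε / 2) * ∑ r' : R, Real.exp (ε * u (h, r') / (2 * Δ)) := by
      rw [Finset.mul_sum]
      apply Finset.sum_le_sum
      intro r' _
      apply key
      rw [abs_sub_comm]
      exact hsens h h' hneighbor r'
    have hpos : ∀ g : X → ℕ, 0 < ∑ r' : R, Real.exp (ε * u (g, r') / (2 * Δ)) := fun g =>
      Finset.sum_pos (fun _ _ => Real.exp_pos _) Finset.univ_nonempty
    have hee : Real.exp ε = Real.exp (ε / 2) * Real.exp (ε / 2) := by
      rw [← Real.exp_add]; congr 1; ring
    unfold expMech
    rw [← mul_div_assoc, div_le_div_iff₀ (hpos h) (hpos h'), hee]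
    calc _ ≤ _ := mul_le_mul ha hB (hpos h').le (by positivity)
      _ = _ := by ring
  refine ⟨main, fun S => ?_⟩
  rw [Finset.mul_sum]
  exact Finset.sum_le_sum fun r _ => main r
end

section
/- For every ε > 0, every dataset h, and every β > 0, the exponential mechanism satisfies P_h({ r ∈ R : u(h,r) ≤ u_OPT − (2Δ/ε)·ln(|R|/β) }) ≤ β, where u_OPT = max_{r∈R} u(h,r). -/
open scoped Classical

/-- Accuracy of the exponential mechanism: the probability that the selected element
has utility below `u_OPT - (2Δ/ε) * ln (|R|/β)` is at most `β`. -/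
theorem expMech_accuracy {X R : Type*} [Fintype X] [Nonempty X] [Fintype R] [Nonempty R]
    (u : (X → ℕ) × R → ℝ) (Δ : ℝ) (hΔ : 0 < Δ)
    (hsens : ∀ h h' : X → ℕ, (∑ x : X, |(h x : ℤ) - (h' x : ℤ)|) = 1 →
      ∀ r : R, |u (h, r) - u (h', r)| ≤ Δ)
    (ε : ℝ) (hε : 0 < ε) (h : X → ℕ) (β : ℝ) (hβ : 0 < β) :
    ∑ r ∈ Finset.univ.filter (fun r : R =>
        u (h, r) ≤ (Finset.univ.sup' Finset.univ_nonempty fun r' : R => u (h, r'))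
          - (2 * Δ / ε) * Real.log ((Fintype.card R : ℝ) / β)),
      expMech u Δ ε h r ≤ β := by
  have hN : (0 : ℝ) < Fintype.card R := by exact_mod_cast Fintype.card_pos
  have key : ∀ r ∈ Finset.univ.filter (fun r : R =>
        u (h, r) ≤ (Finset.univ.sup' Finset.univ_nonempty fun r' : R => u (h, r'))
          - (2 * Δ / ε) * Real.log ((Fintype.card R : ℝ) / β)),
      expMech u Δ ε h r ≤ β / Fintype.card R := by
    intro r hr
    have hr := (Finset.mem_filter.mp hr).2
    obtain ⟨s, -, hs⟩ := Finset.exists_mem_eq_sup' (Finset.univ_nonempty (α := R))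
      (fun r' : R => u (h, r'))
    rw [hs] at hr
    have hsum : Real.exp (ε * u (h, s) / (2 * Δ)) ≤
        ∑ r' : R, Real.exp (ε * u (h, r') / (2 * Δ)) :=
      Finset.single_le_sum (f := fun r' : R => Real.exp (ε * u (h, r') / (2 * Δ)))
        (fun i _ => (Real.exp_pos _).le) (Finset.mem_univ s)
    unfold expMech
    rw [div_le_iff₀ (lt_of_lt_of_le (Real.exp_pos _) hsum)]
    refine le_trans ?_ (mul_le_mul_of_nonneg_left hsum (by positivity))
    have hlog : Real.exp (-Real.log ((Fintype.card R : ℝ) / β)) = β / Fintype.card R := by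
      rw [Real.exp_neg, Real.exp_log (by positivity), inv_div]
    rw [← hlog, ← Real.exp_add]
    apply Real.exp_le_exp.mpr
    have h2 : ε * u (h, r) / (2 * Δ) ≤
        ε * (u (h, s) - (2 * Δ / ε) * Real.log ((Fintype.card R : ℝ) / β)) / (2 * Δ) := by
      gcongr
    refine h2.trans (le_of_eq ?_)
    field_simp
    ring
  refine (Finset.sum_le_card_nsmul _ _ _ key).trans ?_
  rw [nsmul_eq_mul]
  calc _ ≤ (Fintype.card R : ℝ) * (β / Fintype.card R) := by
        apply mul_le_mul_of_nonneg_right _ (by positivity)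
        exact_mod_cast Finset.card_le_univ _
    _ = β := by field_simp
end

section
/- Suppose |m − q(h)| ≤ 2M, so that |c| ≤ 1 where c = (m − q(h))/(2M). Then the multiplicative-weights normalization constant satisfies Z ≤ 1 + c² + c·q(h)/M, and consequently ln Z ≤ c² + c·q(h)/M. -/
/-- The value of a query `q : X → {0,1}` on a dataset `h : X → ℝ`. -/
noncomputable def qVal {X : Type*} [Fintype X] (q h : X → ℝ) : ℝ :=
  ∑ x : X, h x * q x

/-- Bound on the multiplicative-weights normalization constant:
if `|m - q(h)| ≤ 2M`, then `Z ≤ 1 + c² + c·q(h)/M` and `ln Z ≤ c² + c·q(h)/M`. -/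
theorem mw_normalization_bound {X : Type*} [Fintype X] [Nonempty X]
    (h : X → ℝ) (q : X → ℝ) (hq : ∀ x, q x = 0 ∨ q x = 1)
    (M : ℝ) (hM : 0 < M) (hpos : ∀ x, 0 < h x) (hsum : ∑ x : X, h x = M)
    (m : ℝ) (hm : |m - qVal q h| ≤ 2 * M)
    (c Z : ℝ) (hc : c = (m - qVal q h) / (2 * M))
    (hZ : Z = (1 / M) * ∑ x : X, h x * Real.exp (q x * c)) :
    Z ≤ 1 + c ^ 2 + c * qVal q h / M ∧ Real.log Z ≤ c ^ 2 + c * qVal q h / M := by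
  have hc1 : |c| ≤ 1 := by
    rw [hc, abs_div, abs_of_pos (by positivity : (0 : ℝ) < 2 * M)]
    exact (div_le_one (by positivity)).2 hm
  have he := (abs_le.1 (Real.abs_exp_sub_one_sub_id_le hc1)).2
  have hpt : ∀ x, h x * Real.exp (q x * c) ≤ h x * (1 + c ^ 2) + c * (h x * q x) := by
    intro x
    have hx := hpos x
    rcases hq x with h0 | h0 <;> rw [h0]
    · simp only [zero_mul, Real.exp_zero]
      nlinarith [mul_nonneg hx.le (sq_nonneg c)]
    · rw [one_mul]
      nlinarith [mul_le_mul_of_nonneg_left he hx.le]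
  have hS : ∑ x : X, h x * Real.exp (q x * c) ≤ M * (1 + c ^ 2) + c * qVal q h := by
    refine (Finset.sum_le_sum fun x _ => hpt x).trans (le_of_eq ?_)
    rw [Finset.sum_add_distrib, ← Finset.sum_mul, ← Finset.mul_sum, hsum, qVal]
  have h1 : Z ≤ 1 + c ^ 2 + c * qVal q h / M := by
    rw [hZ]
    calc _ ≤ (1 / M) * (M * (1 + c ^ 2) + c * qVal q h) :=
          mul_le_mul_of_nonneg_left hS (by positivity)
      _ = _ := by field_simp
  have hZpos : 0 < Z := by
    rw [hZ]
    exact mul_pos (by positivity) (Finset.sum_pos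
      (fun x _ => mul_pos (hpos x) (Real.exp_pos _)) Finset.univ_nonempty)
  exact ⟨h1, by linarith [Real.log_le_sub_one_of_pos hZpos]⟩
end

section
/- The change in relative entropy under one multiplicative-weights update equals Ψ(f,h) − Ψ(f,h') = (c/M)·q(f) − ln Z, where c = (m − q(h))/(2M). -/
/-- Relative entropy of a dataset `f` of size `M` to a positive dataset `g` of the
same size (with the convention `0 · ln 0 = 0`). -/
noncomputable def relEnt {X : Type*} [Fintype X] (M : ℝ) (f g : X → ℝ) : ℝ :=
  (1 / M) * ∑ x : X, f x * Real.log (f x / g x)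

/-- The change in relative entropy under one multiplicative-weights update equals
`(c/M)·q(f) - ln Z`. -/
theorem mw_relEnt_change {X : Type*} [Fintype X] [Nonempty X]
    (f h : X → ℝ) (hf : ∀ x, 0 ≤ f x) (M : ℝ) (hM : 0 < M)
    (hfsum : ∑ x : X, f x = M)
    (hpos : ∀ x, 0 < h x) (hsum : ∑ x : X, h x = M)
    (q : X → ℝ) (hq : ∀ x, q x = 0 ∨ q x = 1) (m : ℝ)
    (c Z : ℝ) (hc : c = (m - qVal q h) / (2 * M))
    (hZ : Z = (1 / M) * ∑ x : X, h x * Real.exp (q x * c))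
    (h' : X → ℝ) (hh' : ∀ x, h' x = h x * Real.exp (q x * c) / Z) :
    relEnt M f h - relEnt M f h' = (c / M) * qVal q f - Real.log Z := by
  have hZpos : 0 < Z := by
    rw [hZ]
    have : 0 < ∑ x : X, h x * Real.exp (q x * c) :=
      Finset.sum_pos (fun x _ => mul_pos (hpos x) (Real.exp_pos _)) Finset.univ_nonempty
    positivity
  have key : ∀ x, f x * Real.log (f x / h x) - f x * Real.log (f x / h' x)
      = c * (f x * q x) - f x * Real.log Z := by
    intro x
    rcases (hf x).eq_or_lt with h0 | h0
    · simp [← h0]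
    · have hx := hpos x
      have he := Real.exp_pos (q x * c)
      rw [hh', Real.log_div h0.ne' hx.ne', Real.log_div h0.ne' (by positivity),
        Real.log_div (by positivity) hZpos.ne', Real.log_mul hx.ne' he.ne', Real.log_exp]
      ring
  unfold relEnt qVal
  rw [← mul_sub, ← Finset.sum_sub_distrib, Finset.sum_congr rfl (fun x _ => key x),
    Finset.sum_sub_distrib, ← Finset.mul_sum, ← Finset.sum_mul, hfsum]
  field_simp
end

section
/- Suppose |m − q(h)| ≤ 2M. Then one multiplicative-weights update decreases the relative entropy by at least Ψ(f,h) − Ψ(f,h') ≥ ((q(h) − q(f))/(2M))² − ((m − q(f))/(2M))². -/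
/-- One multiplicative-weights update decreases the relative entropy by at least
`((q(h) - q(f))/(2M))² - ((m - q(f))/(2M))²`. -/
theorem mw_relEnt_progress {X : Type*} [Fintype X] [Nonempty X]
    (f h : X → ℝ) (hf : ∀ x, 0 ≤ f x) (M : ℝ) (hM : 0 < M)
    (hfsum : ∑ x : X, f x = M)
    (hpos : ∀ x, 0 < h x) (hsum : ∑ x : X, h x = M)
    (q : X → ℝ) (hq : ∀ x, q x = 0 ∨ q x = 1) (m : ℝ)
    (hm : |m - qVal q h| ≤ 2 * M)
    (c Z : ℝ) (hc : c = (m - qVal q h) / (2 * M))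
    (hZ : Z = (1 / M) * ∑ x : X, h x * Real.exp (q x * c))
    (h' : X → ℝ) (hh' : ∀ x, h' x = h x * Real.exp (q x * c) / Z) :
    relEnt M f h - relEnt M f h' ≥
      ((qVal q h - qVal q f) / (2 * M)) ^ 2 - ((m - qVal q f) / (2 * M)) ^ 2 := by
  have hc1 : |c| ≤ 1 := by
    rw [hc, abs_div, abs_of_pos (by positivity : (0:ℝ) < 2 * M)]
    exact (div_le_one (by positivity)).2 hm
  have hexp : Real.exp c ≤ 1 + c + c ^ 2 := by
    have h1 := (abs_le.1 (Real.abs_exp_sub_one_sub_id_le hc1)).2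
    linarith
  have hS : ∑ x : X, h x * Real.exp (q x * c) = M + qVal q h * (Real.exp c - 1) := by
    rw [← hsum, qVal, Finset.sum_mul, ← Finset.sum_add_distrib]
    refine Finset.sum_congr rfl fun x _ => ?_
    rcases hq x with h0 | h0 <;> simp [h0]
    ring
  have hZpos : 0 < Z := by
    rw [hZ]
    have : 0 < ∑ x : X, h x * Real.exp (q x * c) :=
      Finset.sum_pos (fun x _ => mul_pos (hpos x) (Real.exp_pos _)) Finset.univ_nonempty
    positivity
  have hb0 : 0 ≤ qVal q h := Finset.sum_nonneg fun x _ => by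
    rcases hq x with h0 | h0 <;> simp [h0, (hpos x).le]
  have hb1 : qVal q h ≤ M := by
    rw [← hsum]
    refine Finset.sum_le_sum fun x _ => ?_
    rcases hq x with h0 | h0 <;> simp [h0, (hpos x).le]
  obtain ⟨b, hb⟩ : ∃ b, b = qVal q h / M := ⟨_, rfl⟩
  obtain ⟨a, ha⟩ : ∃ a, a = qVal q f / M := ⟨_, rfl⟩
  have hbn : 0 ≤ b := by rw [hb]; positivity
  have hbl : b ≤ 1 := by rw [hb]; exact (div_le_one hM).2 hb1
  have hZ2 : Z = 1 + b * (Real.exp c - 1) := by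
    rw [hZ, hS, hb]; field_simp
  have hlog : Real.log Z ≤ b * c + c ^ 2 := by
    have h1 := Real.log_le_sub_one_of_pos hZpos
    have h2 : b * (Real.exp c - 1) ≤ b * (c + c ^ 2) :=
      mul_le_mul_of_nonneg_left (by linarith) hbn
    have h3 : b * c ^ 2 ≤ c ^ 2 := mul_le_of_le_one_left (sq_nonneg c) hbl
    linarith
  have hdiff : relEnt M f h - relEnt M f h' = a * c - Real.log Z := by
    have key : ∑ x : X, f x * Real.log (f x / h x) - ∑ x : X, f x * Real.log (f x / h' x)
        = qVal q f * c - M * Real.log Z := by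
      rw [← hfsum, qVal, Finset.sum_mul, Finset.sum_mul, ← Finset.sum_sub_distrib,
        ← Finset.sum_sub_distrib]
      refine Finset.sum_congr rfl fun x _ => ?_
      rcases (hf x).eq_or_lt with h0 | h0
      · simp [← h0]
      · have e1 := (hpos x).ne'
        have e2 := (Real.exp_pos (q x * c)).ne'
        rw [hh' x, Real.log_div h0.ne' e1,
          Real.log_div h0.ne' (div_ne_zero (mul_ne_zero e1 e2) hZpos.ne'),
          Real.log_div (mul_ne_zero e1 e2) hZpos.ne', Real.log_mul e1 e2, Real.log_exp]
        ring
    rw [relEnt, relEnt, ← mul_sub, key, ha]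
    field_simp
  have e1 : (qVal q h - qVal q f) / (2 * M) = (b - a) / 2 := by
    rw [ha, hb]; field_simp
  have e2 : (m - qVal q f) / (2 * M) = c + (b - a) / 2 := by
    rw [ha, hb, hc]; field_simp; ring
  rw [hdiff, e1, e2]
  nlinarith [hlog]
end

section
/- Deterministic MWEM error bound: let Q be a nonempty finite set of queries, f a dataset with ∑_x f(x) = M > 0, and h₀ the uniform dataset h₀(x) = M/|X|. Let k ≥ 1 and suppose for l = 1,…,k we are given queries q_l ∈ Q and measurements m_l ∈ ℝ with |m_l − q_l(h_{l−1})| ≤ 2M, and h_l is the multiplicative-weights update of h_{l−1} with respect to (q_l, m_l). Suppose s, a ≥ 0 are such that for each l ∈ {1,…,k}: max_{q∈Q} |q(h_{l−1}) − q(f)| ≤ |q_l(h_{l−1}) − q_l(f)| + s (selection guarantee) and |m_l − q_l(f)| ≤ a (measurement guarantee). Then (1/k)·∑_{l=1}^k max_{q∈Q} |q(h_{l−1}) − q(f)| ≤ 2M·√(ln|X| / k) + a + s. -/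
/-- The multiplicative-weights update of a dataset `h` of size `M` with respect to a
query `q` and a measurement `m`. -/
noncomputable def mwUpdate {X : Type*} [Fintype X] (M : ℝ) (q : X → ℝ) (m : ℝ)
    (h : X → ℝ) : X → ℝ :=
  fun x => h x * Real.exp (q x * ((m - qVal q h) / (2 * M))) /
    ((1 / M) * ∑ y : X, h y * Real.exp (q y * ((m - qVal q h) / (2 * M))))

lemma mw_step {X : Type*} [Fintype X] [Nonempty X] (f : X → ℝ) (hf : ∀ x, 0 ≤ f x) (M : ℝ)
    (hM : 0 < M) (hfsum : ∑ x : X, f x = M) (q : X → ℝ) (hq : ∀ x, q x = 0 ∨ q x = 1)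
    (h : X → ℝ) (hpos : ∀ x, 0 < h x) (hsum : ∑ x : X, h x = M) (m : ℝ)
    (hm : |m - qVal q h| ≤ 2 * M) :
    (∀ x, 0 < mwUpdate M q m h x) ∧ (∑ x : X, mwUpdate M q m h x = M) ∧
    (qVal q h - qVal q f) ^ 2 ≤ 4 * M * (∑ x, f x * Real.log (mwUpdate M q m h x)
      - ∑ x, f x * Real.log (h x)) + (m - qVal q f) ^ 2 := by
  obtain ⟨c, hc⟩ : ∃ c, c = (m - qVal q h) / (2 * M) := ⟨_, rfl⟩
  obtain ⟨S, hS⟩ : ∃ S, S = ∑ y : X, h y * Real.exp (q y * c) := ⟨_, rfl⟩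
  have hU : ∀ x, mwUpdate M q m h x = h x * Real.exp (q x * c) / ((1 / M) * S) := by
    intro x
    rw [hS, hc]
    rfl
  have hSpos : 0 < S := by
    rw [hS]
    exact Finset.sum_pos (fun x _ => mul_pos (hpos x) (Real.exp_pos _)) Finset.univ_nonempty
  have hZ : 0 < (1 / M) * S := by positivity
  have hc1 : |c| ≤ 1 := by
    rw [hc, abs_div, abs_of_pos (by positivity : 0 < 2 * M), div_le_one (by positivity)]
    exact hm
  refine ⟨fun x => ?_, ?_, ?_⟩
  · rw [hU]
    exact div_pos (mul_pos (hpos x) (Real.exp_pos _)) hZ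
  · simp_rw [hU]
    rw [← Finset.sum_div, ← hS]
    field_simp
  · have h1 : ∑ x, f x * Real.log (mwUpdate M q m h x) - ∑ x, f x * Real.log (h x)
        = c * qVal q f - M * Real.log ((1 / M) * S) := by
      have : ∀ x, f x * Real.log (mwUpdate M q m h x) =
          f x * Real.log (h x) + c * (f x * q x) - f x * Real.log ((1 / M) * S) := by
        intro x
        rw [hU, Real.log_div (mul_pos (hpos x) (Real.exp_pos _)).ne' hZ.ne',
          Real.log_mul (hpos x).ne' (Real.exp_pos _).ne', Real.log_exp]
        ring
      simp_rw [this]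
      rw [Finset.sum_sub_distrib, Finset.sum_add_distrib, ← Finset.sum_mul, hfsum,
        ← Finset.mul_sum, qVal]
      ring
    have h2 : S ≤ M + c * qVal q h + M * c ^ 2 := by
      have : M + c * qVal q h + M * c ^ 2 = ∑ x, (h x + c * (h x * q x) + h x * c ^ 2) := by
        rw [Finset.sum_add_distrib, Finset.sum_add_distrib, ← Finset.sum_mul, hsum,
          ← Finset.mul_sum, qVal]
      rw [this, hS]
      refine Finset.sum_le_sum fun x _ => ?_
      have hb := (abs_le.1 (Real.abs_exp_sub_one_sub_id_le hc1)).2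
      rcases hq x with h0 | h0 <;> rw [h0]
      · have := mul_nonneg (hpos x).le (sq_nonneg c)
        simp
        linarith
      · have := mul_le_mul_of_nonneg_left hb (hpos x).le
        simp only [one_mul]
        linarith
    have h3 : M * Real.log ((1 / M) * S) ≤ c * qVal q h + M * c ^ 2 := by
      have := mul_le_mul_of_nonneg_left (Real.log_le_sub_one_of_pos hZ) hM.le
      have e : M * ((1 / M) * S - 1) = S - M := by field_simp
      linarith
    have h4 : m = qVal q h + 2 * M * c := by
      rw [hc]
      field_simp
      ring
    rw [h1]
    have h5 := mul_le_mul_of_nonneg_left h3 (by positivity : 0 ≤ 4 * M)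
    rw [h4]
    nlinarith [h5]

/-- Deterministic MWEM error bound: under a selection guarantee with slack `s` and a
measurement guarantee with additive error `a`, the average (over the `k` iterations)
of the worst-case query error is at most `2M·√(ln|X|/k) + a + s`. -/
theorem mwem_error_bound {X : Type*} [Fintype X] [Nonempty X]
    (Q : Finset (X → ℝ)) (hQ : Q.Nonempty)
    (hq01 : ∀ q ∈ Q, ∀ x, q x = 0 ∨ q x = 1)
    (f : X → ℝ) (hf : ∀ x, 0 ≤ f x) (M : ℝ) (hM : 0 < M) (hfsum : ∑ x : X, f x = M)
    (k : ℕ) (hk : 1 ≤ k)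
    (h : ℕ → X → ℝ) (ql : ℕ → X → ℝ) (ml : ℕ → ℝ)
    (h0 : h 0 = fun _ => M / Fintype.card X)
    (hql : ∀ l ∈ Finset.Icc 1 k, ql l ∈ Q)
    (hml : ∀ l ∈ Finset.Icc 1 k, |ml l - qVal (ql l) (h (l - 1))| ≤ 2 * M)
    (hupd : ∀ l ∈ Finset.Icc 1 k, h l = mwUpdate M (ql l) (ml l) (h (l - 1)))
    (s a : ℝ) (hs : 0 ≤ s) (ha : 0 ≤ a)
    (hsel : ∀ l ∈ Finset.Icc 1 k, ∀ q ∈ Q,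
      |qVal q (h (l - 1)) - qVal q f| ≤ |qVal (ql l) (h (l - 1)) - qVal (ql l) f| + s)
    (hmeas : ∀ l ∈ Finset.Icc 1 k, |ml l - qVal (ql l) f| ≤ a) :
    (1 / (k : ℝ)) * ∑ l ∈ Finset.Icc 1 k,
        Q.sup' hQ (fun q => |qVal q (h (l - 1)) - qVal q f|)
      ≤ 2 * M * Real.sqrt (Real.log (Fintype.card X) / k) + a + s := by
  have hstep : ∀ l, l < k → (∀ x, 0 < h l x) → (∑ x, h l x = M) → _ := fun l hl hp hs' =>
    have hm : l + 1 ∈ Finset.Icc 1 k := Finset.mem_Icc.2 ⟨by omega, by omega⟩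
    mw_step f hf M hM hfsum (ql (l + 1)) (hq01 _ (hql _ hm)) (h l) hp hs' (ml (l + 1))
      (hml (l + 1) hm)
  have hup : ∀ l, l < k → mwUpdate M (ql (l + 1)) (ml (l + 1)) (h l) = h (l + 1) := fun l hl =>
    (hupd (l + 1) (Finset.mem_Icc.2 ⟨by omega, by omega⟩)).symm
  have hcard : (0 : ℝ) < Fintype.card X := by exact_mod_cast Fintype.card_pos
  have hinv : ∀ l, l ≤ k → (∀ x, 0 < h l x) ∧ ∑ x, h l x = M := by
    intro l
    induction l with
    | zero =>
      intro _
      rw [h0]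
      refine ⟨fun x => by positivity, ?_⟩
      simp
      field_simp
    | succ l ih =>
      intro hl
      obtain ⟨i1, i2⟩ := ih (by omega)
      have := hstep l (by omega) i1 i2
      rw [hup l (by omega)] at this
      exact ⟨this.1, this.2.1⟩
  have hdec : ∀ l ∈ Finset.range k, (qVal (ql (l + 1)) (h l) - qVal (ql (l + 1)) f) ^ 2 ≤
      4 * M * (∑ x, f x * Real.log (h (l + 1) x) - ∑ x, f x * Real.log (h l x)) + a ^ 2 := by
    intro l hl
    have hl' := Finset.mem_range.1 hl
    obtain ⟨i1, i2⟩ := hinv l hl'.le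
    have := (hstep l hl' i1 i2).2.2
    rw [hup l hl'] at this
    have h2 := sq_le_sq' (abs_le.1 (hmeas (l + 1) (Finset.mem_Icc.2 ⟨by omega, by omega⟩))).1
      (abs_le.1 (hmeas (l + 1) (Finset.mem_Icc.2 ⟨by omega, by omega⟩))).2
    linarith
  have hsumdec := Finset.sum_le_sum hdec
  rw [Finset.sum_add_distrib, ← Finset.mul_sum,
    Finset.sum_range_sub (fun l => ∑ x, f x * Real.log (h l x))] at hsumdec
  have hfirst : ∑ x, f x * Real.log (h 0 x) = M * (Real.log M - Real.log (Fintype.card X)) := by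
    rw [h0, ← Finset.sum_mul, hfsum, Real.log_div hM.ne' hcard.ne']
  have hlast : ∑ x, f x * Real.log (h k x) ≤ M * Real.log M := by
    obtain ⟨i1, i2⟩ := hinv k le_rfl
    calc _ ≤ ∑ x, f x * Real.log M := by
          refine Finset.sum_le_sum fun x _ => mul_le_mul_of_nonneg_left ?_ (hf x)
          refine Real.log_le_log (i1 x) ?_
          rw [← i2]
          exact Finset.single_le_sum (fun y _ => (i1 y).le) (Finset.mem_univ x)
      _ = _ := by rw [← Finset.sum_mul, hfsum]
  have hkpos : (0 : ℝ) < k := by exact_mod_cast hk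
  set L := Real.log (Fintype.card X) with hL
  have hL0 : 0 ≤ L := Real.log_natCast_nonneg _
  set r := Real.sqrt (L / k) with hr
  have hr0 : 0 ≤ r := Real.sqrt_nonneg _
  have hr2 : k * r ^ 2 = L := by
    rw [hr, Real.sq_sqrt (by positivity)]
    field_simp
  have hsq : ∑ l ∈ Finset.range k, (qVal (ql (l + 1)) (h l) - qVal (ql (l + 1)) f) ^ 2
      ≤ k * (2 * M * r + a) ^ 2 := by
    have e1 : 4 * M * (∑ x, f x * Real.log (h k x) - ∑ x, f x * Real.log (h 0 x))
        ≤ 4 * M * (M * L) := by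
      refine mul_le_mul_of_nonneg_left ?_ (by positivity)
      rw [hfirst]
      linarith
    simp only [Finset.sum_const, Finset.card_range, nsmul_eq_mul] at hsumdec
    have e2 : 0 ≤ (k : ℝ) * (4 * M * r * a) := by positivity
    rw [← hr2] at e1
    nlinarith
  have hcs := sq_sum_le_card_mul_sum_sq (s := Finset.range k)
    (f := fun l => |qVal (ql (l + 1)) (h l) - qVal (ql (l + 1)) f|)
  simp only [sq_abs, Finset.card_range] at hcs
  have habs : ∑ l ∈ Finset.range k, |qVal (ql (l + 1)) (h l) - qVal (ql (l + 1)) f|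
      ≤ k * (2 * M * r + a) := by
    refine (pow_le_pow_iff_left₀ (Finset.sum_nonneg fun _ _ => abs_nonneg _) (by positivity) two_ne_zero).1 ?_
    have := mul_le_mul_of_nonneg_left hsq hkpos.le
    nlinarith
  have hfin : ∑ l ∈ Finset.Icc 1 k, Q.sup' hQ (fun q => |qVal q (h (l - 1)) - qVal q f|)
      ≤ k * (2 * M * r + a) + k * s := by
    calc _ ≤ ∑ l ∈ Finset.Icc 1 k, (|qVal (ql l) (h (l - 1)) - qVal (ql l) f| + s) :=
          Finset.sum_le_sum fun l hl => Finset.sup'_le _ _ (hsel l hl)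
      _ = ∑ l ∈ Finset.range k, (|qVal (ql (l + 1)) (h l) - qVal (ql (l + 1)) f| + s) := by
          symm
          refine Finset.sum_bij (fun l _ => l + 1) ?_ ?_ ?_ ?_
          · intro l hl
            have := Finset.mem_range.1 hl
            exact Finset.mem_Icc.2 ⟨by omega, by omega⟩
          · intro l _ l' _ hh
            omega
          · intro l hl
            have := Finset.mem_Icc.1 hl
            exact ⟨l - 1, Finset.mem_range.2 (by omega), by omega⟩
          · intro l _
            rfl
      _ ≤ _ := by
          rw [Finset.sum_add_distrib]
          simp only [Finset.sum_const, Finset.card_range, nsmul_eq_mul]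
          linarith
  rw [one_div, inv_mul_le_iff₀ hkpos]
  linarith
end
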